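/- Let n be any positive integer and λ any infinite cardinal, and let 𝓘_λ^n carry a shift-continuous T₁-topology (so that it is a T₁-semitopological semigroup). Then the following conditions are equivalent: (i) 𝓘_λ^n is compact; (ii) 𝓘_λ^n is ω-bounded-pracompact; (iii) 𝓘_λ^n is feebly ω-bounded. -/

import Mathlib

/-!
The substantial implication is that a feebly ω-bounded `𝓘_γ^n` is compact.

Multiplying by `{(a, a)}` on the left and `{(b, b)}` on the right sends every `x` either to
`{(a, b)}` or to the zero, according to whether `(a, b)` lies in the graph of `x`.  In a
`T₁` shift-continuous topology the set `{x | (a, b) ∈ x.graph}` is therefore clopen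
(`isClopen_mem_graph`), that is, the topology is finer than the one of pointwise convergence
of graphs, and elements of rank `n` are isolated (`isOpen_singleton_of_card`).  On a compact
set the two topologies agree, and a compact set contains the pointwise limits of its
sequences (`tendsto_of_pointwise`).

Every `x` is the pointwise limit of a sequence of elements of rank `n`, obtained by adding to
`x` fresh fixed points (`exists_maximal_seq`).  Feeble ω-boundedness yields a compact set
through countably many isolated points, so every sequence of `𝓘_γ^n` lies in a compact set
(`exists_compact_of_seq`).

An ultrafilter `f` has a pointwise limit `α`.  If an open neighbourhood `U` of `α` were not in
`f`, one could choose recursively elements `x₀, x₁, …` outside `U`, all containing `α`, whose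
graphs pairwise meet exactly in the graph of `α`.  This sequence converges pointwise to `α` and
lies in a compact set, hence converges to `α`, which contradicts the choice outside `U`.
-/

open Set Topology Filter

/-- The symmetric inverse semigroup `𝓘_γ^n` of partial bijections of the set `γ`
of rank `≤ n`, represented by their (finite) graphs. -/
structure SymInvSg (γ : Type*) (n : ℕ) where
  graph : Set (γ × γ)
  inj' : ∀ ⦃x y x' y'⦄, (x, y) ∈ graph → (x', y') ∈ graph → (x = x' ↔ y = y')
  finite' : graph.Finite
  card_le' : graph.ncard ≤ n

namespace SymInvSg

variable {γ : Type*} {n : ℕ}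

theorem ext' {a b : SymInvSg γ n} (h : a.graph = b.graph) : a = b := by
  cases a; cases b; simpa using h

/-- Composition of partial bijections (in the left-to-right convention of
transformation semigroups, the choice of convention being immaterial). -/
instance : Mul (SymInvSg γ n) where
  mul a b :=
    { graph := {p | ∃ y, (p.1, y) ∈ a.graph ∧ (y, p.2) ∈ b.graph}
      inj' := by
        rintro x z x' z' ⟨y, hxy, hyz⟩ ⟨y', hxy', hyz'⟩
        constructor
        · rintro rfl
          have hy : y = y' := (a.inj' hxy hxy').mp rfl
          subst hy
          exact (b.inj' hyz hyz').mp rfl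
        · rintro rfl
          have hy : y = y' := (b.inj' hyz hyz').mpr rfl
          subst hy
          exact (a.inj' hxy hxy').mpr rfl
      finite' := by
        have : {p : γ × γ | ∃ y, (p.1, y) ∈ a.graph ∧ (y, p.2) ∈ b.graph} ⊆
            (fun q : (γ × γ) × (γ × γ) => (q.1.1, q.2.2)) '' (a.graph ×ˢ b.graph) := by
          rintro ⟨x, z⟩ ⟨y, hxy, hyz⟩
          exact ⟨((x, y), (y, z)), ⟨hxy, hyz⟩, rfl⟩
        exact Set.Finite.subset (Set.Finite.image _ (a.finite'.prod b.finite')) this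
      card_le' := by
        have hinj : Set.InjOn Prod.fst
            {p : γ × γ | ∃ y, (p.1, y) ∈ a.graph ∧ (y, p.2) ∈ b.graph} := by
          rintro ⟨x, z⟩ ⟨y, hxy, hyz⟩ ⟨x', z'⟩ ⟨y', hxy', hyz'⟩ h
          simp only at h
          subst h
          have hy : y = y' := (a.inj' hxy hxy').mp rfl
          subst hy
          have hz : z = z' := (b.inj' hyz hyz').mp rfl
          simp [hz]
        calc ({p : γ × γ | ∃ y, (p.1, y) ∈ a.graph ∧ (y, p.2) ∈ b.graph}).ncard
            ≤ (Prod.fst '' a.graph).ncard := by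
              refine Set.ncard_le_ncard_of_injOn Prod.fst ?_ hinj (a.finite'.image _)
              rintro ⟨x, z⟩ hp
              exact ⟨(x, hp.choose), hp.choose_spec.1, rfl⟩
          _ ≤ a.graph.ncard := Set.ncard_image_le a.finite'
          _ ≤ n := a.card_le' }

theorem mul_graph (a b : SymInvSg γ n) :
    (a * b).graph = {p : γ × γ | ∃ y, (p.1, y) ∈ a.graph ∧ (y, p.2) ∈ b.graph} := rfl

instance : Semigroup (SymInvSg γ n) where
  mul_assoc a b c := by
    refine ext' ?_
    simp only [mul_graph]
    ext ⟨x, w⟩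
    constructor
    · rintro ⟨z, ⟨y, hxy, hyz⟩, hzw⟩
      exact ⟨y, hxy, z, hyz, hzw⟩
    · rintro ⟨y, hxy, z, hyz, hzw⟩
      exact ⟨z, ⟨y, hxy, hyz⟩, hzw⟩

/-- The zero of `𝓘_γ^n` is the empty partial map. -/
instance : Zero (SymInvSg γ n) :=
  ⟨{ graph := ∅
     inj' := by simp
     finite' := Set.finite_empty
     card_le' := by simp }⟩

/-- The natural partial order on the inverse semigroup `𝓘_γ^n`:
`α ≼ β` iff the graph of `α` is contained in the graph of `β`. -/
instance : PartialOrder (SymInvSg γ n) where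
  le a b := a.graph ⊆ b.graph
  le_refl a := subset_rfl
  le_trans a b c h₁ h₂ := Set.Subset.trans h₁ h₂
  le_antisymm a b h₁ h₂ := ext' (subset_antisymm h₁ h₂)

/-- The rank of a partial bijection: the cardinality of its domain
(equivalently, of its graph). -/
noncomputable def rank (a : SymInvSg γ n) : ℕ := a.graph.ncard

/-- `𝓘_A^n`: the subsemigroup of partial bijections with domain and range inside `A`. -/
def restrictedTo (A : Set γ) : Set (SymInvSg γ n) :=
  {α | ∀ p ∈ α.graph, p.1 ∈ A ∧ p.2 ∈ A}

end SymInvSg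

/-- A topology is shift-continuous when all left and right translations are continuous,
i.e. the space is a semitopological semigroup. -/
def ShiftContinuous (X : Type*) [TopologicalSpace X] [Mul X] : Prop :=
  ∀ a : X, Continuous (fun x => a * x) ∧ Continuous (fun x => x * a)

/-- A space is feebly compact if every locally finite family of nonempty open sets is finite. -/
def FeeblyCompact (X : Type*) [TopologicalSpace X] : Prop :=
  ∀ F : Set (Set X), (∀ U ∈ F, IsOpen U ∧ U.Nonempty) →
    LocallyFinite (fun U : F => (U : Set X)) → F.Finite

/-- A space is sequentially pracompact if it has a dense subset `D` such that every
sequence in `D` has a convergent subsequence. -/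
def SequentiallyPracompact (X : Type*) [TopologicalSpace X] : Prop :=
  ∃ D : Set X, Dense D ∧ ∀ u : ℕ → X, (∀ k, u k ∈ D) →
    ∃ (x : X) (φ : ℕ → ℕ), StrictMono φ ∧ Filter.Tendsto (u ∘ φ) Filter.atTop (nhds x)

/-- A space is totally countably pracompact if it has a dense subset `D` such that every
sequence in `D` has a subsequence whose closure is compact. -/
def TotallyCountablyPracompact (X : Type*) [TopologicalSpace X] : Prop :=
  ∃ D : Set X, Dense D ∧ ∀ u : ℕ → X, (∀ k, u k ∈ D) →
    ∃ φ : ℕ → ℕ, StrictMono φ ∧ IsCompact (closure (Set.range (u ∘ φ)))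

/-- A space is countably pracompact if it has a dense subset `A` such that every infinite
subset of `A` has an accumulation point in the space. -/
def CountablyPracompact (X : Type*) [TopologicalSpace X] : Prop :=
  ∃ A : Set X, Dense A ∧ ∀ B ⊆ A, B.Infinite → ∃ x : X, AccPt x (Filter.principal B)

/-- A space is ω-bounded-pracompact if it has a dense subset `D` such that every countable
subset of `D` has compact closure. -/
def OmegaBoundedPracompact (X : Type*) [TopologicalSpace X] : Prop :=
  ∃ D : Set X, Dense D ∧ ∀ C ⊆ D, C.Countable → IsCompact (closure C)

/-- A space is feebly ω-bounded if for every sequence of nonempty open sets there is a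
compact set meeting all of them. -/
def FeeblyOmegaBounded (X : Type*) [TopologicalSpace X] : Prop :=
  ∀ U : ℕ → Set X, (∀ k, IsOpen (U k) ∧ (U k).Nonempty) →
    ∃ K : Set X, IsCompact K ∧ ∀ k, (K ∩ U k).Nonempty

namespace SymInvSg

/-- The partial bijection of rank one sending `a` to `b` (this is where `n` is positive). -/
def single {γ : Type*} {n : ℕ} (hn : 0 < n) (a b : γ) : SymInvSg γ n where
  graph := {(a, b)}
  inj' := by
    intro x y x' y' h h'
    simp only [Set.mem_singleton_iff, Prod.mk.injEq] at h h'
    simp [h, h']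
  finite' := Set.finite_singleton _
  card_le' := by
    rw [Set.ncard_singleton]
    exact hn

theorem isClopen_mem_graph {γ : Type*} {n : ℕ} (hn : 0 < n)
    [TopologicalSpace (SymInvSg γ n)] [T1Space (SymInvSg γ n)]
    (hsc : ShiftContinuous (SymInvSg γ n)) (p : γ × γ) :
    IsClopen {x : SymInvSg γ n | p ∈ x.graph} := by
  obtain ⟨a, b⟩ := p
  have hcont : Continuous (fun x : SymInvSg γ n => single hn a a * x * single hn b b) :=
    (hsc (single hn b b)).2.comp (hsc (single hn a a)).1
  have hgraph : ∀ x : SymInvSg γ n, (single hn a a * x * single hn b b).graph =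
      {q | q = (a, b) ∧ (a, b) ∈ x.graph} := by
    intro x
    ext ⟨c, d⟩
    simp only [mul_graph, single, Set.mem_singleton_iff, Prod.mk.injEq, Set.mem_ofPred_eq]
    constructor
    · rintro ⟨y, ⟨z, ⟨rfl, rfl⟩, hz⟩, rfl, rfl⟩
      exact ⟨⟨rfl, rfl⟩, hz⟩
    · rintro ⟨⟨rfl, rfl⟩, h⟩
      exact ⟨d, ⟨c, ⟨rfl, rfl⟩, h⟩, rfl, rfl⟩
  have h1 : {x : SymInvSg γ n | (a, b) ∈ x.graph} =
      (fun x => single hn a a * x * single hn b b) ⁻¹' {single hn a b} := by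
    ext x
    simp only [Set.mem_ofPred_eq, Set.mem_preimage, Set.mem_singleton_iff]
    constructor
    · intro h
      apply ext'
      rw [hgraph]
      ext q
      simp [h, single]
    · intro h
      have : (a, b) ∈ (single hn a b : SymInvSg γ n).graph := rfl
      rw [← h, hgraph] at this
      exact this.2
  have h2 : {x : SymInvSg γ n | (a, b) ∈ x.graph}ᶜ =
      (fun x => single hn a a * x * single hn b b) ⁻¹' {0} := by
    ext x
    simp only [Set.mem_compl_iff, Set.mem_ofPred_eq, Set.mem_preimage, Set.mem_singleton_iff]
    constructor
    · intro h
      apply ext'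
      rw [hgraph]
      ext q
      simp only [h, and_false, Set.mem_ofPred_eq, false_iff]
      exact fun hq => hq
    · intro h hx
      have : (a, b) ∈ (single hn a a * x * single hn b b).graph := by
        rw [hgraph]
        exact ⟨rfl, hx⟩
      rw [h] at this
      exact this
  refine ⟨h1 ▸ isClosed_singleton.preimage hcont, ?_⟩
  rw [← isClosed_compl_iff, h2]
  exact isClosed_singleton.preimage hcont

theorem isOpen_singleton_of_card {γ : Type*} {n : ℕ} (hn : 0 < n)
    [TopologicalSpace (SymInvSg γ n)] [T1Space (SymInvSg γ n)]
    (hsc : ShiftContinuous (SymInvSg γ n)) (x : SymInvSg γ n) (hx : x.graph.ncard = n) :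
    IsOpen {x} := by
  have h : {x} = ⋂ p ∈ x.graph, {y : SymInvSg γ n | p ∈ y.graph} := by
    ext y
    simp only [Set.mem_singleton_iff, Set.mem_iInter, Set.mem_ofPred_eq]
    constructor
    · rintro rfl
      exact fun p hp => hp
    · intro h
      exact (ext' (Set.eq_of_subset_of_ncard_le h (y.card_le'.trans hx.ge) y.finite')).symm
  rw [h]
  exact x.finite'.isOpen_biInter fun p _ => (isClopen_mem_graph hn hsc p).isOpen

/-- Compact sets are closed under pointwise limits of sequences, and pointwise convergence
inside a compact set is convergence. -/
theorem tendsto_of_pointwise {γ : Type*} {n : ℕ} (hn : 0 < n)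
    [TopologicalSpace (SymInvSg γ n)] [T1Space (SymInvSg γ n)]
    (hsc : ShiftContinuous (SymInvSg γ n)) {K : Set (SymInvSg γ n)} (hK : IsCompact K)
    {u : ℕ → SymInvSg γ n} (huK : ∀ k, u k ∈ K) {x : SymInvSg γ n}
    (hmem : ∀ k, x.graph ⊆ (u k).graph)
    (hnot : ∀ p ∉ x.graph, ∀ᶠ k in atTop, p ∉ (u k).graph) :
    x ∈ K ∧ Tendsto u atTop (𝓝 x) := by
  have key : ∀ g : Ultrafilter ℕ, (g : Filter ℕ) ≤ atTop →
      x ∈ K ∧ Tendsto u g (𝓝 x) := by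
    intro g hg
    obtain ⟨y, hyK, hy⟩ := isCompact_iff_ultrafilter_le_nhds.1 hK (g.map u)
      (by
        rw [Filter.le_principal_iff]
        exact Ultrafilter.mem_map.2 (Filter.univ_mem' huK))
    have hyx : y = x := by
      apply ext'
      ext p
      by_cases hp : p ∈ x.graph
      · refine iff_of_true ?_ hp
        by_contra hpy
        have h1 : ∀ᶠ k in (g : Filter ℕ), p ∉ (u k).graph :=
          hy ((isClopen_mem_graph hn hsc p).compl.isOpen.mem_nhds hpy)
        obtain ⟨k, hk⟩ := h1.exists
        exact hk (hmem k hp)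
      · refine iff_of_false ?_ hp
        intro hpy
        have h1 : ∀ᶠ k in (g : Filter ℕ), p ∈ (u k).graph :=
          hy ((isClopen_mem_graph hn hsc p).isOpen.mem_nhds hpy)
        obtain ⟨k, hk, hk'⟩ := (h1.and (hg (hnot p hp))).exists
        exact hk' hk
    subst hyx
    exact ⟨hyK, hy⟩
  refine ⟨(key (Ultrafilter.of atTop) (Ultrafilter.of_le _)).1, ?_⟩
  rw [tendsto_iff_ultrafilter]
  exact fun g hg => (key g hg).2

theorem exists_maximal_seq {γ : Type*} [Infinite γ] {n : ℕ} (x : SymInvSg γ n) :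
    ∃ u : ℕ → SymInvSg γ n, (∀ k, (u k).graph.ncard = n) ∧ (∀ k, x.graph ⊆ (u k).graph) ∧
      ∀ p ∉ x.graph, ∀ᶠ k in atTop, p ∉ (u k).graph := by
  classical
  have hfin : (Prod.fst '' x.graph ∪ Prod.snd '' x.graph).Finite :=
    (x.finite'.image _).union (x.finite'.image _)
  -- `g (k, i)` is the `i`-th fixed point added at stage `k`, outside the domain and range of `x`.
  obtain ⟨g, hg, hgx⟩ : ∃ g : ℕ × ℕ → γ, Function.Injective g ∧
      ∀ q, g q ∉ Prod.fst '' x.graph ∪ Prod.snd '' x.graph := by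
    have : Infinite ↥(Prod.fst '' x.graph ∪ Prod.snd '' x.graph)ᶜ :=
      hfin.infinite_compl.to_subtype
    let e := Infinite.natEmbedding ↥(Prod.fst '' x.graph ∪ Prod.snd '' x.graph)ᶜ
    exact ⟨fun q => e (Nat.pairEquiv q),
      Subtype.val_injective.comp (e.injective.comp Nat.pairEquiv.injective),
      fun q => (e (Nat.pairEquiv q)).2⟩
  have hg1 : ∀ q y, (g q, y) ∉ x.graph := fun q y h => hgx q (Or.inl ⟨_, h, rfl⟩)
  have hg2 : ∀ q y, (y, g q) ∉ x.graph := fun q y h => hgx q (Or.inr ⟨_, h, rfl⟩)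
  let d : ℕ → Set (γ × γ) := fun k =>
    (fun i => (g (k, i), g (k, i))) '' (Set.Iio (n - x.graph.ncard))
  have hdfin : ∀ k, (d k).Finite := fun k => (Set.finite_Iio _).image _
  have hdcard : ∀ k, (d k).ncard = n - x.graph.ncard := by
    intro k
    have hinj : Function.Injective (fun i => (g (k, i), g (k, i))) := by
      intro i j h
      have := hg (Prod.mk.inj h).1
      exact (Prod.mk.inj this).2
    rw [Set.ncard_image_of_injective _ hinj]
    simp [Set.ncard_eq_toFinset_card']
  have hdisj : ∀ k, Disjoint x.graph (d k) := by
    intro k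
    rw [Set.disjoint_right]
    rintro _ ⟨i, _, rfl⟩
    exact hg1 _ _
  have hcard : ∀ k, (x.graph ∪ d k).ncard = n := by
    intro k
    rw [Set.ncard_union_eq (hdisj k) x.finite' (hdfin k), hdcard]
    have := x.card_le'
    omega
  refine ⟨fun k => ⟨x.graph ∪ d k, ?_, x.finite'.union (hdfin k), (hcard k).le⟩, hcard,
    fun k => Set.subset_union_left, ?_⟩
  · rintro a b a' b' (h | ⟨i, -, h⟩) (h' | ⟨j, -, h'⟩)
    · exact x.inj' h h'
    · obtain ⟨rfl, rfl⟩ := Prod.mk.inj h'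
      refine iff_of_false ?_ ?_
      · rintro rfl
        exact hg1 _ _ h
      · rintro rfl
        exact hg2 _ _ h
    · obtain ⟨rfl, rfl⟩ := Prod.mk.inj h
      refine iff_of_false ?_ ?_
      · intro e
        exact hg1 _ _ (e ▸ h')
      · intro e
        exact hg2 _ _ (e ▸ h')
    · obtain ⟨rfl, rfl⟩ := Prod.mk.inj h
      obtain ⟨rfl, rfl⟩ := Prod.mk.inj h'
      exact Iff.rfl
  · intro p hp
    by_cases h : ∃ m, p ∈ d m
    · obtain ⟨m, i, -, rfl⟩ := h
      filter_upwards [eventually_gt_atTop m] with k hk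
      rintro (h | ⟨j, -, h⟩)
      · exact hp h
      · have := (Prod.mk.inj (hg (Prod.mk.inj h).1)).1
        omega
    · filter_upwards with k
      rintro (h' | h')
      · exact hp h'
      · exact h ⟨k, h'⟩

theorem exists_compact_of_seq {γ : Type*} [Infinite γ] {n : ℕ} (hn : 0 < n)
    [TopologicalSpace (SymInvSg γ n)] [T1Space (SymInvSg γ n)]
    (hsc : ShiftContinuous (SymInvSg γ n)) (hf : FeeblyOmegaBounded (SymInvSg γ n))
    (u : ℕ → SymInvSg γ n) : ∃ K, IsCompact K ∧ ∀ k, u k ∈ K := by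
  choose v hv1 hv2 hv3 using fun k => exists_maximal_seq (u k)
  obtain ⟨K, hK, hKv⟩ := hf (fun m => {v m.unpair.1 m.unpair.2})
    fun m => ⟨isOpen_singleton_of_card hn hsc _ (hv1 _ _), Set.singleton_nonempty _⟩
  have hvK : ∀ k j, v k j ∈ K := by
    intro k j
    obtain ⟨y, hy, hy'⟩ := hKv (Nat.pair k j)
    rw [Nat.unpair_pair, Set.mem_singleton_iff] at hy'
    exact hy' ▸ hy
  exact ⟨K, hK, fun k => (tendsto_of_pointwise hn hsc hK (hvK k) (hv2 k) (hv3 k)).1⟩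

/-- The pointwise limit of an ultrafilter on `𝓘_γ^n`: graphs of partial bijections of rank at
most `n` form a closed subset of the power set of `γ × γ`. -/
theorem exists_ultrafilter_graph {γ : Type*} {n : ℕ} (f : Ultrafilter (SymInvSg γ n)) :
    ∃ α : SymInvSg γ n, ∀ p, p ∈ α.graph ↔ ∀ᶠ x in (f : Filter (SymInvSg γ n)), p ∈ x.graph := by
  let G : Set (γ × γ) := {p | ∀ᶠ x in (f : Filter (SymInvSg γ n)), p ∈ x.graph}
  have hsub : ∀ t : Finset (γ × γ), (t : Set (γ × γ)) ⊆ G → t.card ≤ n := by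
    intro t ht
    have : ∀ᶠ x in (f : Filter (SymInvSg γ n)), ∀ p ∈ t, p ∈ x.graph :=
      (Filter.eventually_all_finset t).2 fun p hp => ht hp
    obtain ⟨x, hx⟩ := this.exists
    rw [← Set.ncard_coe_finset]
    exact (Set.ncard_le_ncard hx x.finite').trans x.card_le'
  have hfin : G.Finite := by
    by_contra hinf
    obtain ⟨t, ht, hcard⟩ := Set.Infinite.exists_subset_card_eq hinf (n + 1)
    have := hsub t ht
    omega
  refine ⟨⟨G, ?_, hfin, ?_⟩, fun p => Iff.rfl⟩
  · intro a b a' b' h h'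
    obtain ⟨x, hx, hx'⟩ := (Filter.Eventually.and h h').exists
    exact x.inj' hx hx'
  · rw [Set.ncard_eq_toFinset_card G hfin]
    exact hsub _ (by simp)

theorem compactSpace_of_feeblyOmegaBounded {γ : Type*} [Infinite γ] {n : ℕ} (hn : 0 < n)
    [TopologicalSpace (SymInvSg γ n)] [T1Space (SymInvSg γ n)]
    (hsc : ShiftContinuous (SymInvSg γ n)) (hf : FeeblyOmegaBounded (SymInvSg γ n)) :
    CompactSpace (SymInvSg γ n) := by
  refine ⟨isCompact_iff_ultrafilter_le_nhds.2 fun f _ => ?_⟩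
  obtain ⟨α, hα⟩ := exists_ultrafilter_graph f
  refine ⟨α, Set.mem_univ _, fun U hU => ?_⟩
  by_contra hUf
  have hUf' : ∀ᶠ x in (f : Filter (SymInvSg γ n)), x ∉ U :=
    Ultrafilter.compl_mem_iff_notMem.2 hUf
  have hαf : ∀ᶠ x in (f : Filter (SymInvSg γ n)), α.graph ⊆ x.graph :=
    (Filter.eventually_all_finite α.finite').2 fun p hp => (hα p).1 hp
  obtain ⟨u, hu, hur⟩ := exists_seq_of_forall_finset_exists
    (fun x : SymInvSg γ n => x ∉ U ∧ α.graph ⊆ x.graph)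
    (fun x y => x.graph ∩ y.graph ⊆ α.graph) (by
      intro s _
      have hs : ∀ᶠ y in (f : Filter (SymInvSg γ n)), ∀ x ∈ s, x.graph ∩ y.graph ⊆ α.graph := by
        rw [Filter.eventually_all_finset]
        intro x _
        have : ∀ᶠ y in (f : Filter (SymInvSg γ n)),
            ∀ p ∈ x.graph, p ∈ y.graph → p ∈ α.graph := by
          rw [Filter.eventually_all_finite x.finite']
          intro p _
          by_cases hp : p ∈ α.graph
          · exact Filter.Eventually.of_forall fun _ _ => hp
          · have h := Ultrafilter.eventually_not.2 (fun h => hp ((hα p).2 h))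
            exact h.mono fun y hy hy' => absurd hy' hy
        exact this.mono fun y hy p hp => hy p hp.1 hp.2
      obtain ⟨y, ⟨hy1, hy2⟩, hy3⟩ := ((hUf'.and hαf).and hs).exists
      exact ⟨y, ⟨hy1, hy2⟩, hy3⟩)
  obtain ⟨K, hK, huK⟩ := exists_compact_of_seq hn hsc hf u
  have hlim := (tendsto_of_pointwise hn hsc hK huK (fun k => (hu k).2) (by
    intro p hp
    by_cases h : ∃ m, p ∈ (u m).graph
    · obtain ⟨m, hm⟩ := h
      filter_upwards [eventually_gt_atTop m] with k hk hpk
      exact hp (hur m k hk ⟨hm, hpk⟩)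
    · exact Filter.Eventually.of_forall fun k hk => h ⟨k, hk⟩)).2
  obtain ⟨k, hk⟩ := (hlim.eventually hU).exists
  exact (hu k).1 hk

end SymInvSg

theorem OmegaBoundedPracompact.of_compactSpace (X : Type*) [TopologicalSpace X]
    [CompactSpace X] : OmegaBoundedPracompact X :=
  ⟨Set.univ, dense_univ, fun _ _ _ => isClosed_closure.isCompact⟩

theorem OmegaBoundedPracompact.feeblyOmegaBounded {X : Type*} [TopologicalSpace X]
    (h : OmegaBoundedPracompact X) : FeeblyOmegaBounded X := by
  obtain ⟨D, hD, hC⟩ := h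
  intro U hU
  choose x hxU hxD using fun k => hD.inter_open_nonempty (U k) (hU k).1 (hU k).2
  refine ⟨closure (Set.range x), hC _ ?_ (Set.countable_range x), fun k => ⟨x k, ?_, hxU k⟩⟩
  · rintro _ ⟨k, rfl⟩
    exact hxD k
  · exact subset_closure ⟨k, rfl⟩

/-- For a `T₁`-semitopological semigroup `𝓘_λ^n` (`n` a positive integer,
`λ` an infinite cardinal) the conditions "compact", "ω-bounded-pracompact" and
"feebly ω-bounded" are equivalent. -/
theorem compact_iff_omegaBoundedPracompact_iff_feeblyOmegaBounded
    {γ : Type*} [Infinite γ] {n : ℕ} (hn : 0 < n)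
    [TopologicalSpace (SymInvSg γ n)] [T1Space (SymInvSg γ n)]
    (hsc : ShiftContinuous (SymInvSg γ n)) :
    (CompactSpace (SymInvSg γ n) ↔ OmegaBoundedPracompact (SymInvSg γ n)) ∧
    (OmegaBoundedPracompact (SymInvSg γ n) ↔ FeeblyOmegaBounded (SymInvSg γ n)) := by
  have h12 : CompactSpace (SymInvSg γ n) → OmegaBoundedPracompact (SymInvSg γ n) :=
    fun _ => OmegaBoundedPracompact.of_compactSpace _
  have h31 := SymInvSg.compactSpace_of_feeblyOmegaBounded hn hsc
  exact ⟨⟨h12, fun h => h31 h.feeblyOmegaBounded⟩,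
    ⟨fun h => h.feeblyOmegaBounded, fun h => h12 (h31 h)⟩⟩
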